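/- Let q ∈ ℂ with 0 < |q| < 1, let A : ℤ → ℂ be any sequence, and let x ∈ ℂ. Assume the families (i,j) ↦ A_{i-j} q^{ij} x^j / ((q;q)_i (q;q)_j) and (i,j) ↦ A_{i-j} x^j / ((q;q)_i (q;q)_j), both indexed by ℕ×ℕ, are absolutely summable. Then ∑_{i,j≥0} A_{i-j} q^{ij} x^j / ((q;q)_i (q;q)_j) = (x;q)_∞ · ∑_{i,j≥0} A_{i-j} x^j / ((q;q)_i (q;q)_j). -/

import Mathlib

/-- The finite q-shifted factorial `(a;q)_n = ∏_{k=0}^{n-1} (1 - a q^k)`. -/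
noncomputable def qPoch (a q : ℂ) (n : ℕ) : ℂ := ∏ k ∈ Finset.range n, (1 - a * q ^ k)

/-- The infinite q-shifted factorial `(a;q)_∞ = ∏_{k=0}^{∞} (1 - a q^k)`. -/
noncomputable def qPochInf (a q : ℂ) : ℂ := ∏' k : ℕ, (1 - a * q ^ k)

/-!
The `q`-Vandermonde sum, in the form given by Durfee rectangles,
`∑ₖ q^((i-k)(j-k)) / ((q;q)_k (q;q)_(i-k) (q;q)_(j-k)) = 1 / ((q;q)_i (q;q)_j)`,
turns the double series without the factor `q^(ij)` into a triple series. Since the shift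
`(i, j) ↦ (i + k, j + k)` preserves `i - j`, this triple series is the product of the double
series with the factor `q^(ij)` and `∑ₖ x^k / (q;q)_k`. For `‖x‖ < 1` the latter is
`1 / (x;q)_∞` by Euler's identity; for `‖x‖ ≥ 1` summability along the diagonals `i - j = n`
forces `A = 0`.
-/

open Filter Topology Finset

section Reindexing

variable {E : Type*} [AddCommMonoid E] [TopologicalSpace E] [ContinuousAdd E] [RegularSpace E]

lemma hasSum_sum_range_min {f : ℕ × ℕ × ℕ → E} {a : E} (hf : HasSum f a) :
    HasSum (fun p : ℕ × ℕ => ∑ k ∈ range (min p.1 p.2 + 1), f (k, p.1 - k, p.2 - k)) a := by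
  let shift : ℕ × ℕ × ℕ → (ℕ × ℕ) × ℕ := fun t => ((t.2.1 + t.1, t.2.2 + t.1), t.1)
  let F : (ℕ × ℕ) × ℕ → E := fun s =>
    if s.2 ≤ min s.1.1 s.1.2 then f (s.2, s.1.1 - s.2, s.1.2 - s.2) else 0
  have shift_injective : Function.Injective shift := by
    rintro ⟨k, i, j⟩ ⟨k', i', j'⟩ h
    simp only [shift, Prod.mk.injEq] at h ⊢
    omega
  have F_comp_shift : F ∘ shift = f := by
    ext ⟨k, i, j⟩
    simp [F, shift]
  have F_eq_zero : ∀ s ∉ Set.range shift, F s = 0 := by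
    rintro ⟨⟨i, j⟩, k⟩ hs
    refine if_neg fun (hk : k ≤ min i j) => hs ⟨(k, i - k, j - k), ?_⟩
    simp only [shift, Prod.mk.injEq, and_true]
    omega
  have hF : HasSum F a := (shift_injective.hasSum_iff F_eq_zero).1 (F_comp_shift ▸ hf)
  refine hF.prod_fiberwise fun p => ?_
  have hfiber : ∑ k ∈ range (min p.1 p.2 + 1), f (k, p.1 - k, p.2 - k) =
      ∑ k ∈ range (min p.1 p.2 + 1), F (p, k) :=
    sum_congr rfl fun k hk => (if_pos (mem_range_succ_iff.1 hk)).symm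
  rw [hfiber]
  exact hasSum_sum_of_ne_finset_zero fun k hk => if_neg (mem_range_succ_iff.not.1 hk)

end Reindexing

section Algebra

variable {q : ℂ}

lemma qPoch_self_succ (q : ℂ) (n : ℕ) : qPoch q q (n + 1) = qPoch q q n * (1 - q ^ (n + 1)) := by
  rw [qPoch, prod_range_succ, ← pow_succ', ← qPoch]

lemma div_qPoch_self_succ (hq : ∀ n, qPoch q q n ≠ 0) (a : ℂ) (n : ℕ) :
    a * (1 - q ^ (n + 1)) / qPoch q q (n + 1) = a / qPoch q q n := by
  have hsucc := hq (n + 1)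
  rw [qPoch_self_succ] at hsucc ⊢
  exact mul_div_mul_right _ _ (right_ne_zero_of_mul hsucc)

-- The `q`-Pascal rule: split `1 - q^(k+l) = (1 - q^l) + q^l (1 - q^k)` and cancel in each part.
lemma one_sub_mul_sum_antidiagonal_succ (hq : ∀ n, qPoch q q n ≠ 0) (a : ℕ → ℂ) (m : ℕ) :
    (1 - q ^ (m + 1)) *
        ∑ p ∈ antidiagonal (m + 1), a p.2 / (qPoch q q p.1 * qPoch q q p.2) =
      ∑ p ∈ antidiagonal m,
        (a (p.2 + 1) + q ^ p.2 * a p.2) / (qPoch q q p.1 * qPoch q q p.2) := by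
  have split : ∀ p ∈ antidiagonal (m + 1),
      (1 - q ^ (m + 1)) * (a p.2 / (qPoch q q p.1 * qPoch q q p.2)) =
        a p.2 / qPoch q q p.1 * (1 - q ^ p.2) / qPoch q q p.2 +
          q ^ p.2 * a p.2 / qPoch q q p.2 * (1 - q ^ p.1) / qPoch q q p.1 := by
    intro p hp
    rw [← mem_antidiagonal.1 hp, pow_add]
    ring
  rw [mul_sum, sum_congr rfl split, sum_add_distrib, Nat.sum_antidiagonal_succ',
    Nat.sum_antidiagonal_succ]
  simp only [div_qPoch_self_succ hq, pow_zero, sub_self, mul_zero, zero_div, zero_add]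
  rw [← sum_add_distrib]
  refine sum_congr rfl fun p _ => ?_
  ring

lemma sum_antidiagonal_durfee (hq : ∀ n, qPoch q q n ≠ 0) (m n : ℕ) :
    ∑ p ∈ antidiagonal m,
        q ^ (p.2 * (p.2 + n)) / qPoch q q (p.2 + n) / (qPoch q q p.1 * qPoch q q p.2) =
      1 / (qPoch q q m * qPoch q q (m + n)) := by
  induction m generalizing n with
  | zero => simp [qPoch]
  | succ m ih =>
    have hm : 1 - q ^ (m + 1) ≠ 0 := right_ne_zero_of_mul (qPoch_self_succ q m ▸ hq (m + 1))
    have weight (l : ℕ) : q ^ ((l + 1) * (l + 1 + n)) / qPoch q q (l + 1 + n) +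
        q ^ l * (q ^ (l * (l + n)) / qPoch q q (l + n)) =
          q ^ (l * (l + (n + 1))) / qPoch q q (l + (n + 1)) := by
      rw [← mul_div_assoc, ← div_qPoch_self_succ hq _ (l + n), add_right_comm l 1 n,
        ← add_assoc l n]
      ring
    apply mul_left_cancel₀ hm
    rw [one_sub_mul_sum_antidiagonal_succ hq
      (fun l => q ^ (l * (l + n)) / qPoch q q (l + n)) m]
    simp only [weight]
    rw [ih (n + 1), qPoch_self_succ q m, add_right_comm m 1 n, ← add_assoc m n]
    field_simp

lemma sum_range_min_durfee (hq : ∀ n, qPoch q q n ≠ 0) (i j : ℕ) :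
    ∑ k ∈ range (min i j + 1), q ^ ((i - k) * (j - k)) /
        (qPoch q q k * (qPoch q q (i - k) * qPoch q q (j - k))) =
      1 / (qPoch q q i * qPoch q q j) := by
  wlog hij : i ≤ j generalizing i j
  · simpa only [min_comm, mul_comm] using this j i (le_of_not_ge hij)
  obtain ⟨n, rfl⟩ := Nat.exists_eq_add_of_le hij
  rw [← sum_antidiagonal_durfee hq, min_eq_left hij,
    Nat.sum_antidiagonal_eq_sum_range_succ fun k l =>
      q ^ (l * (l + n)) / qPoch q q (l + n) / (qPoch q q k * qPoch q q l)]
  refine sum_congr rfl fun k hk => ?_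
  rw [Nat.sub_add_comm (mem_range_succ_iff.1 hk), div_div]
  ring

end Algebra

/-- The small `q`-exponential `e_q(x) = ∑ₖ x^k / (q;q)_k`, which expands `1 / (x;q)_∞` on the unit
disc. -/
noncomputable def qExp (q x : ℂ) : ℂ := ∑' k : ℕ, x ^ k / qPoch q q k

section Analysis

variable {q x : ℂ}

lemma one_sub_pow_succ_ne_zero (hq : ‖q‖ < 1) (n : ℕ) : 1 - q ^ (n + 1) ≠ 0 := by
  intro h
  have hlt : ‖q ^ (n + 1)‖ < 1 := by
    simpa only [norm_pow] using pow_lt_one₀ (norm_nonneg q) hq n.succ_ne_zero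
  rw [← sub_eq_zero.1 h, norm_one] at hlt
  exact lt_irrefl _ hlt

lemma qPoch_self_ne_zero (hq : ‖q‖ < 1) (n : ℕ) : qPoch q q n ≠ 0 :=
  prod_ne_zero_iff.2 fun k _ => pow_succ' q k ▸ one_sub_pow_succ_ne_zero hq k

lemma tendsto_qPoch (hq : ‖q‖ < 1) (a : ℂ) :
    Tendsto (qPoch a q) atTop (𝓝 (qPochInf a q)) := by
  have hsum : Summable fun k : ℕ => ‖-(a * q ^ k)‖ := by
    simpa only [norm_neg, norm_mul, norm_pow] using
      (summable_geometric_of_lt_one (norm_nonneg q) hq).mul_left ‖a‖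
  have hmul : Multipliable fun k : ℕ => 1 - a * q ^ k := by
    simpa only [sub_eq_add_neg] using multipliable_one_add_of_summable hsum
  exact hmul.hasProd.tendsto_prod_nat

lemma summable_pow_div_qPoch (hq : ‖q‖ < 1) (hx : ‖x‖ < 1) :
    Summable fun k : ℕ => x ^ k / qPoch q q k := by
  obtain ⟨r, hxr, hr⟩ := exists_between hx
  have hratio : Tendsto (fun k : ℕ => ‖x / (1 - q ^ (k + 1))‖) atTop (𝓝 ‖x‖) := by
    have hpow := (tendsto_pow_atTop_nhds_zero_of_norm_lt_one hq).comp (tendsto_add_atTop_nat 1)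
    simpa using (tendsto_const_nhds (x := x).div (hpow.const_sub 1) (by simp)).norm
  refine summable_of_ratio_norm_eventually_le hr ?_
  filter_upwards [hratio.eventually_le_const hxr] with k hk
  calc ‖x ^ (k + 1) / qPoch q q (k + 1)‖
      = ‖x / (1 - q ^ (k + 1))‖ * ‖x ^ k / qPoch q q k‖ := by
        rw [← norm_mul, qPoch_self_succ, pow_succ', mul_comm (qPoch q q k), mul_div_mul_comm]
    _ ≤ r * ‖x ^ k / qPoch q q k‖ := by gcongr

lemma norm_pow_mul_lt_one (hq : ‖q‖ < 1) (hx : ‖x‖ < 1) (N : ℕ) : ‖q ^ N * x‖ < 1 := by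
  rw [norm_mul, norm_pow]
  exact mul_lt_one_of_nonneg_of_lt_one_right (pow_le_one₀ (norm_nonneg q) hq.le) (norm_nonneg x) hx

lemma one_sub_mul_qExp (hq : ‖q‖ < 1) (hx : ‖x‖ < 1) : (1 - x) * qExp q x = qExp q (q * x) := by
  have hsx := summable_pow_div_qPoch hq hx
  have hsqx := summable_pow_div_qPoch hq (by simpa using norm_pow_mul_lt_one hq hx 1 : ‖q * x‖ < 1)
  have hdiff : qExp q x - qExp q (q * x) = x * qExp q x := by
    rw [qExp, qExp, ← hsx.tsum_sub hsqx, (hsx.sub hsqx).tsum_eq_zero_add, ← tsum_mul_left]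
    simp only [pow_zero, sub_self, zero_add]
    refine tsum_congr fun k => ?_
    rw [← mul_div_assoc, ← div_qPoch_self_succ (qPoch_self_ne_zero hq) (x * x ^ k)]
    ring
  linear_combination hdiff

lemma qPoch_mul_qExp (hq : ‖q‖ < 1) (hx : ‖x‖ < 1) (N : ℕ) :
    qPoch x q N * qExp q x = qExp q (q ^ N * x) := by
  induction N with
  | zero => simp [qPoch]
  | succ N ih =>
    calc qPoch x q (N + 1) * qExp q x
        = (1 - q ^ N * x) * (qPoch x q N * qExp q x) := by
          rw [qPoch, prod_range_succ, ← qPoch]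
          ring
      _ = qExp q (q * (q ^ N * x)) := by
          rw [ih, one_sub_mul_qExp hq (norm_pow_mul_lt_one hq hx N)]
      _ = qExp q (q ^ (N + 1) * x) := by rw [pow_succ', mul_assoc]

lemma tendsto_qExp_pow_mul (hq : ‖q‖ < 1) (hx : ‖x‖ < 1) :
    Tendsto (fun N : ℕ => qExp q (q ^ N * x)) atTop (𝓝 1) := by
  have hterm (k : ℕ) : Tendsto (fun N : ℕ => (q ^ N * x) ^ k / qPoch q q k) atTop
      (𝓝 (0 ^ k / qPoch q q k)) := by
    have hpow := (tendsto_pow_atTop_nhds_zero_of_norm_lt_one hq).mul_const x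
    rw [zero_mul] at hpow
    exact (hpow.pow k).div_const _
  have hbound : ∀ᶠ N : ℕ in atTop, ∀ k,
      ‖(q ^ N * x) ^ k / qPoch q q k‖ ≤ ‖x ^ k / qPoch q q k‖ := by
    refine Eventually.of_forall fun N k => ?_
    rw [norm_div, norm_div, norm_pow, norm_pow, norm_mul, norm_pow]
    gcongr
    exact mul_le_of_le_one_left (norm_nonneg x) (pow_le_one₀ (norm_nonneg q) hq.le)
  have hzero : ∑' k : ℕ, 0 ^ k / qPoch q q k = 1 := by
    rw [tsum_eq_single 0 fun k hk => by simp [hk]]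
    simp [qPoch]
  rw [← hzero]
  exact tendsto_tsum_of_dominated_convergence (summable_pow_div_qPoch hq hx).norm hterm hbound

theorem qPochInf_mul_qExp (hq : ‖q‖ < 1) (hx : ‖x‖ < 1) : qPochInf x q * qExp q x = 1 :=
  tendsto_nhds_unique (((tendsto_qPoch hq x).mul_const _).congr (qPoch_mul_qExp hq hx))
    (tendsto_qExp_pow_mul hq hx)

end Analysis

section DoubleSeries

variable {q x : ℂ} {A : ℤ → ℂ}

theorem hasSum_qExp_mul_tsum (hq : ‖q‖ < 1) (hx : ‖x‖ < 1)
    (hA : Summable fun p : ℕ × ℕ => ‖A ((p.1 : ℤ) - (p.2 : ℤ)) * q ^ (p.1 * p.2) *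
      x ^ p.2 / (qPoch q q p.1 * qPoch q q p.2)‖) :
    HasSum (fun p : ℕ × ℕ => A ((p.1 : ℤ) - (p.2 : ℤ)) *
        x ^ p.2 / (qPoch q q p.1 * qPoch q q p.2))
      (qExp q x * ∑' p : ℕ × ℕ, A ((p.1 : ℤ) - (p.2 : ℤ)) * q ^ (p.1 * p.2) *
        x ^ p.2 / (qPoch q q p.1 * qPoch q q p.2)) := by
  have hexp := summable_pow_div_qPoch hq hx
  have hprod := summable_mul_of_summable_norm hexp.norm hA
  have htriple := hexp.hasSum.mul hA.of_norm.hasSum hprod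
  refine (hasSum_sum_range_min htriple).congr_fun ?_
  rintro ⟨i, j⟩
  rw [← mul_one_div, ← sum_range_min_durfee (qPoch_self_ne_zero hq), mul_sum]
  refine sum_congr rfl fun k hk => ?_
  obtain ⟨hki, hkj⟩ := le_min_iff.1 (mem_range_succ_iff.1 hk)
  have hdiag : ((i - k : ℕ) : ℤ) - ((j - k : ℕ) : ℤ) = i - j := by omega
  rw [hdiag, ← pow_mul_pow_sub x hkj]
  ring

lemma eq_zero_of_summable_of_one_le_norm (hq : ‖q‖ < 1) (hx : 1 ≤ ‖x‖)
    (hA : Summable fun p : ℕ × ℕ => A ((p.1 : ℤ) - (p.2 : ℤ)) *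
      x ^ p.2 / (qPoch q q p.1 * qPoch q q p.2)) : A = 0 := by
  ext n
  let diag : ℕ → ℕ × ℕ := fun m => (m + n.toNat, m + (-n).toNat)
  have diag_injective : Function.Injective diag := fun m m' h => by simpa [diag] using h
  have diag_sub (m : ℕ) : ((diag m).1 : ℤ) - ((diag m).2 : ℤ) = n := by
    simp only [diag]
    omega
  have hterm := (hA.comp_injective diag_injective).tendsto_atTop_zero
  have hfst := (tendsto_qPoch hq q).comp (tendsto_add_atTop_nat n.toNat)
  have hsnd := (tendsto_qPoch hq q).comp (tendsto_add_atTop_nat (-n).toNat)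
  have hlim := (hterm.mul (hfst.mul hsnd)).norm
  rw [zero_mul, norm_zero] at hlim
  refine norm_le_zero_iff.1 (ge_of_tendsto' hlim fun m => ?_)
  calc ‖A n‖
      ≤ ‖A n * x ^ (diag m).2‖ := by
        rw [norm_mul, norm_pow]
        exact le_mul_of_one_le_right (norm_nonneg _) (one_le_pow₀ hx)
    _ = ‖A n * x ^ (diag m).2 / (qPoch q q (diag m).1 * qPoch q q (diag m).2) *
          (qPoch q q (diag m).1 * qPoch q q (diag m).2)‖ := by
        rw [div_mul_cancel₀ _ (mul_ne_zero (qPoch_self_ne_zero hq _) (qPoch_self_ne_zero hq _))]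
    _ = _ := by
        simp only [Function.comp_apply, diag_sub, diag]

end DoubleSeries

theorem stmt7 (q : ℂ) (hq0 : 0 < ‖q‖) (hq1 : ‖q‖ < 1)
    (A : ℤ → ℂ) (x : ℂ)
    (h1 : Summable (fun p : ℕ × ℕ => ‖A ((p.1 : ℤ) - (p.2 : ℤ)) * q ^ (p.1 * p.2) *
      x ^ p.2 / (qPoch q q p.1 * qPoch q q p.2)‖))
    (h2 : Summable (fun p : ℕ × ℕ => ‖A ((p.1 : ℤ) - (p.2 : ℤ)) *
      x ^ p.2 / (qPoch q q p.1 * qPoch q q p.2)‖)) :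
    ∑' p : ℕ × ℕ, A ((p.1 : ℤ) - (p.2 : ℤ)) * q ^ (p.1 * p.2) *
      x ^ p.2 / (qPoch q q p.1 * qPoch q q p.2)
    = qPochInf x q * ∑' p : ℕ × ℕ, A ((p.1 : ℤ) - (p.2 : ℤ)) *
      x ^ p.2 / (qPoch q q p.1 * qPoch q q p.2) := by
  rcases lt_or_ge ‖x‖ 1 with hx | hx
  · rw [(hasSum_qExp_mul_tsum hq1 hx h1).tsum_eq, ← mul_assoc, qPochInf_mul_qExp hq1 hx, one_mul]
  · simp [eq_zero_of_summable_of_one_le_norm hq1 hx h2.of_norm]
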